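/- arXiv:2204.01793 — 2 statements merged into one kernel-verified Lean document; each statement's English description precedes it below -/
import Mathlib

section
/- Let w be a graphon on a probability space and λ: ℕ → ℝ≥0 with λ(n) ≤ λ₀ n^{−(1+α)/2} for constants λ₀ ≥ 0, α > 0. Then for all β ∈ [0,1], ε > 0, n > λ₀^{2/α}, and G drawn from the w-random graph model on n vertices, Pr[|Z_G(λ(n), β) − E[Z_G(λ(n), β)]| ≥ ε E[Z_G(λ(n), β)]] ≤ λ₀² / ((n^α − λ₀²) ε²). -/
open MeasureTheory

/-- Adjacency in the `w`-random graph determined by the outcome `ω`: vertex locations `ω.1`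
and i.i.d. uniform `[0,1]` labels `ω.2` on ordered pairs; `i, j` are adjacent iff the label is
at most `w(x_i, x_j)`. -/
def edgeOccW {Xs : Type*} {n : ℕ} (w : Xs → Xs → ℝ)
    (ω : (Fin n → Xs) × (Fin n × Fin n → ℝ)) (i j : Fin n) : Prop :=
  (i < j ∧ ω.2 (i, j) ≤ w (ω.1 i) (ω.1 j)) ∨
  (j < i ∧ ω.2 (j, i) ≤ w (ω.1 j) (ω.1 i))

open Classical in
/-- Partition function `Z_G(λ, β)` (with `β₀ = 1`) of the random graph determined by `ω`:
`Σ_{σ : [n] → {0,1}} λ^{#σ⁻¹(1)} β^{#edges with both endpoints 1}`. -/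
noncomputable def Zrand {Xs : Type*} {n : ℕ} (w : Xs → Xs → ℝ) (lam beta : ℝ)
    (ω : (Fin n → Xs) × (Fin n × Fin n → ℝ)) : ℝ :=
  ∑ σ : Fin n → Bool,
    lam ^ (Finset.univ.filter fun v => σ v = true).card *
    beta ^ ((Finset.univ.filter fun q : Fin n × Fin n =>
        q.1 < q.2 ∧ σ q.1 = true ∧ σ q.2 = true ∧ edgeOccW w ω q.1 q.2).card)

/-- Integrals of products of functions of disjoint coordinates factor. -/
lemma pi_integral_mul_disjoint {ι X : Type*} [Fintype ι] [DecidableEq ι] [MeasurableSpace X]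
    (μ : Measure X) [IsProbabilityMeasure μ] (A B : Finset ι) (hAB : Disjoint A B)
    (f g : (ι → X) → ℝ) (hf : Measurable f) (hg : Measurable g)
    (hfA : ∀ x y, (∀ i ∈ A, x i = y i) → f x = f y)
    (hgB : ∀ x y, (∀ i ∈ B, x i = y i) → g x = g y) :
    ∫ x, f x * g x ∂(Measure.pi fun _ : ι => μ) =
      (∫ x, f x ∂(Measure.pi fun _ : ι => μ)) * ∫ x, g x ∂(Measure.pi fun _ : ι => μ) := by
  obtain ⟨x0⟩ : Nonempty X := μ.nonempty_of_neZero
  have key : ∀ (C : Finset ι) (h : (ι → X) → ℝ), Measurable h →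
      (∀ x y, (∀ i ∈ C, x i = y i) → h x = h y) →
      ∃ H : (C → X) → ℝ, Measurable H ∧ h = H ∘ (fun x (i : C) => x i) := by
    intro C h hh hC
    refine ⟨fun y => h (fun i => if hi : i ∈ C then y ⟨i, hi⟩ else x0), ?_, ?_⟩
    · refine hh.comp (measurable_pi_lambda _ fun i => ?_)
      by_cases hi : i ∈ C
      · simp only [hi, dite_true]
        exact measurable_pi_apply _
      · simp only [hi, dite_false]
        exact measurable_const
    · funext x
      refine hC _ _ fun i hi => ?_
      simp [hi]
  obtain ⟨F, hF, hfF⟩ := key A f hf hfA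
  obtain ⟨G, hG, hgG⟩ := key B g hg hgB
  have h1 : ProbabilityTheory.iIndepFun (fun (i : ι) (ω : ι → X) => ω i)
      (Measure.pi fun _ : ι => μ) :=
    ProbabilityTheory.iIndepFun_pi (X := fun _ x => x) (fun i => aemeasurable_id)
  have h2 := h1.indepFun_finset A B hAB (fun i => measurable_pi_apply i)
  have h3 : ProbabilityTheory.IndepFun f g (Measure.pi fun _ : ι => μ) := by
    rw [hfF, hgG]
    exact h2.comp hF hG
  exact h3.integral_fun_mul_eq_mul_integral hf.aestronglyMeasurable hg.aestronglyMeasurable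

open Classical in
/-- Edge weight of a vertex set. -/
noncomputable def fWt {Xs : Type*} {n : ℕ} (w : Xs → Xs → ℝ) (beta : ℝ) (S : Finset (Fin n))
    (ω : (Fin n → Xs) × (Fin n × Fin n → ℝ)) : ℝ :=
  ∏ q : Fin n × Fin n, if (q.1 < q.2 ∧ q.1 ∈ S ∧ q.2 ∈ S) ∧ ω.2 q ≤ w (ω.1 q.1) (ω.1 q.2)
    then beta else 1

lemma Zrand_eq {Xs : Type*} {n : ℕ} (w : Xs → Xs → ℝ) (lam beta : ℝ)
    (ω : (Fin n → Xs) × (Fin n × Fin n → ℝ)) :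
    Zrand w lam beta ω = ∑ S : Finset (Fin n), lam ^ S.card * fWt w beta S ω := by
  classical
  unfold Zrand
  refine Finset.sum_bij' (fun σ _ => Finset.univ.filter fun v => σ v = true)
    (fun S _ => fun v => decide (v ∈ S)) (by simp) (by simp) ?_ ?_ ?_
  · intro σ _
    funext v
    simp
  · intro S _
    ext v
    simp
  · intro σ _
    unfold fWt
    rw [Finset.prod_ite]
    simp only [Finset.prod_const, one_pow, mul_one]
    congr 2
    · congr 1
      ext q
      rw [Finset.mem_filter, Finset.mem_filter]
      simp only [Finset.mem_filter, Finset.mem_univ, true_and, edgeOccW]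
      constructor
      · rintro ⟨h1, h2, h3, h4⟩
        rcases h4 with h4 | h4
        · exact ⟨⟨h1, h2, h3⟩, h4.2⟩
        · exact absurd h1 (lt_asymm h4.1)
      · rintro ⟨⟨h1, h2, h3⟩, h4⟩
        exact ⟨h1, h2, h3, Or.inl ⟨h1, h4⟩⟩

section
variable {Xs : Type*} {n : ℕ} (w : Xs → Xs → ℝ) (beta : ℝ)

lemma fWt_nonneg (h0 : 0 ≤ beta) (S : Finset (Fin n)) (ω) : 0 ≤ fWt w beta S ω := by
  unfold fWt
  refine Finset.prod_nonneg fun q _ => ?_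
  split_ifs <;> simp [h0]

lemma fWt_le_one (h0 : 0 ≤ beta) (h1 : beta ≤ 1) (S : Finset (Fin n)) (ω) :
    fWt w beta S ω ≤ 1 := by
  unfold fWt
  refine Finset.prod_le_one (fun q _ => ?_) (fun q _ => ?_) <;> split_ifs <;> simp [h0, h1]

lemma fWt_anti (h0 : 0 ≤ beta) (h1 : beta ≤ 1) {S T : Finset (Fin n)} (hST : S ⊆ T) (ω) :
    fWt w beta T ω ≤ fWt w beta S ω := by
  unfold fWt
  refine Finset.prod_le_prod (fun q _ => ?_) (fun q _ => ?_)
  · split_ifs <;> simp [h0]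
  · split_ifs with ha hb hb
    · exact le_rfl
    · exact h1
    · exact absurd ⟨⟨hb.1.1, hST hb.1.2.1, hST hb.1.2.2⟩, hb.2⟩ ha
    · exact le_rfl

lemma fWt_congr (S : Finset (Fin n)) (x y : Fin n → Xs) (a b : Fin n × Fin n → ℝ)
    (hx : ∀ i ∈ S, x i = y i) (ha : ∀ q ∈ S ×ˢ S, a q = b q) :
    fWt w beta S (x, a) = fWt w beta S (y, b) := by
  classical
  unfold fWt
  refine Finset.prod_congr rfl fun q _ => ?_
  by_cases h : q.1 < q.2 ∧ q.1 ∈ S ∧ q.2 ∈ S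
  · simp only [hx _ h.2.1, hx _ h.2.2, ha q (Finset.mem_product.2 h.2)]
  · simp [h]

lemma fWt_empty (ω : (Fin n → Xs) × (Fin n × Fin n → ℝ)) : fWt w beta ∅ ω = 1 := by
  simp [fWt]

lemma fWt_meas [MeasurableSpace Xs] (hw : Measurable (Function.uncurry w))
    (S : Finset (Fin n)) : Measurable (fWt (n := n) w beta S) := by
  classical
  unfold fWt
  refine Finset.measurable_prod _ fun q _ => ?_
  refine Measurable.ite ?_ measurable_const measurable_const
  by_cases h : q.1 < q.2 ∧ q.1 ∈ S ∧ q.2 ∈ S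
  · simp only [h, true_and, and_self]
    refine measurableSet_le ?_ ?_
    · exact (measurable_pi_apply q).comp measurable_snd
    · have h2 : Measurable (fun ω : (Fin n → Xs) × (Fin n × Fin n → ℝ) =>
          (ω.1 q.1, ω.1 q.2)) :=
        ((measurable_pi_apply q.1).comp measurable_fst).prodMk
          ((measurable_pi_apply q.2).comp measurable_fst)
      exact hw.comp h2
  · simp only [h, false_and, Set.ofPred_false, MeasurableSet.empty]

/-- The probability measure of the model. -/
noncomputable abbrev PP [MeasurableSpace Xs] (ξ : Measure Xs) (u : Measure ℝ) (n : ℕ) :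
    Measure ((Fin n → Xs) × (Fin n × Fin n → ℝ)) :=
  (Measure.pi fun _ : Fin n => ξ).prod (Measure.pi fun _ : Fin n × Fin n => u)

lemma integrable_of_unit {Ω : Type*} [MeasurableSpace Ω] (μ : Measure Ω) [IsProbabilityMeasure μ]
    (f : Ω → ℝ) (hf : Measurable f) (h0 : ∀ x, 0 ≤ f x) (h1 : ∀ x, f x ≤ 1) :
    Integrable f μ :=
  Integrable.of_bound hf.aestronglyMeasurable 1
    (Filter.Eventually.of_forall fun x => by rw [Real.norm_of_nonneg (h0 x)]; exact h1 x)

lemma fWt_integrable [MeasurableSpace Xs] (ξ : Measure Xs) [IsProbabilityMeasure ξ]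
    (u : Measure ℝ) [IsProbabilityMeasure u] (hw : Measurable (Function.uncurry w))
    (h0 : 0 ≤ beta) (h1 : beta ≤ 1) (S : Finset (Fin n)) :
    Integrable (fWt w beta S) (PP ξ u n) :=
  integrable_of_unit _ _ (fWt_meas w beta hw S) (fWt_nonneg w beta h0 S)
    (fWt_le_one w beta h0 h1 S)

lemma fWt_mul_integrable [MeasurableSpace Xs] (ξ : Measure Xs) [IsProbabilityMeasure ξ]
    (u : Measure ℝ) [IsProbabilityMeasure u] (hw : Measurable (Function.uncurry w))
    (h0 : 0 ≤ beta) (h1 : beta ≤ 1) (S T : Finset (Fin n)) :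
    Integrable (fun ω => fWt w beta S ω * fWt w beta T ω) (PP ξ u n) :=
  integrable_of_unit _ _ ((fWt_meas w beta hw S).mul (fWt_meas w beta hw T))
    (fun ω => mul_nonneg (fWt_nonneg w beta h0 S ω) (fWt_nonneg w beta h0 T ω))
    (fun ω => mul_le_one₀ (fWt_le_one w beta h0 h1 S ω) (fWt_nonneg w beta h0 T ω)
      (fWt_le_one w beta h0 h1 T ω))

lemma fWt_indep [MeasurableSpace Xs] (ξ : Measure Xs) [IsProbabilityMeasure ξ]
    (u : Measure ℝ) [IsProbabilityMeasure u] (hw : Measurable (Function.uncurry w))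
    (h0 : 0 ≤ beta) (h1 : beta ≤ 1) (S T : Finset (Fin n)) (hST : Disjoint S T) :
    ∫ ω, fWt w beta S ω * fWt w beta T ω ∂(PP ξ u n) =
      (∫ ω, fWt w beta S ω ∂(PP ξ u n)) * ∫ ω, fWt w beta T ω ∂(PP ξ u n) := by
  rw [integral_prod _ (fWt_mul_integrable w beta ξ u hw h0 h1 S T),
    integral_prod _ (fWt_integrable w beta ξ u hw h0 h1 S),
    integral_prod _ (fWt_integrable w beta ξ u hw h0 h1 T)]
  have hdis : Disjoint (S ×ˢ S) (T ×ˢ T) := Finset.disjoint_product.2 (Or.inl hST)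
  have inner : ∀ x : Fin n → Xs,
      ∫ a, fWt w beta S (x, a) * fWt w beta T (x, a) ∂(Measure.pi fun _ : Fin n × Fin n => u) =
      (∫ a, fWt w beta S (x, a) ∂(Measure.pi fun _ : Fin n × Fin n => u)) *
      ∫ a, fWt w beta T (x, a) ∂(Measure.pi fun _ : Fin n × Fin n => u) := by
    intro x
    exact pi_integral_mul_disjoint u (S ×ˢ S) (T ×ˢ T) hdis
      (fun a => fWt w beta S (x, a)) (fun a => fWt w beta T (x, a))
      ((fWt_meas w beta hw S).comp measurable_prodMk_left)
      ((fWt_meas w beta hw T).comp measurable_prodMk_left)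
      (fun a b h => fWt_congr w beta S x x a b (fun _ _ => rfl) h)
      (fun a b h => fWt_congr w beta T x x a b (fun _ _ => rfl) h)
  simp_rw [inner]
  refine pi_integral_mul_disjoint ξ S T hST
    (fun x => ∫ a, fWt w beta S (x, a) ∂(Measure.pi fun _ : Fin n × Fin n => u))
    (fun x => ∫ a, fWt w beta T (x, a) ∂(Measure.pi fun _ : Fin n × Fin n => u)) ?_ ?_ ?_ ?_
  · exact ((fWt_meas w beta hw S).stronglyMeasurable.integral_prod_right').measurable
  · exact ((fWt_meas w beta hw T).stronglyMeasurable.integral_prod_right').measurable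
  · intro x y h
    exact integral_congr_ae (Filter.Eventually.of_forall fun a =>
      fWt_congr w beta S x y a a h (fun _ _ => rfl))
  · intro x y h
    exact integral_congr_ae (Filter.Eventually.of_forall fun a =>
      fWt_congr w beta T x y a a h (fun _ _ => rfl))

end

/-- Combinatorial second-moment bound. -/
lemma sum_sdiff_bound {n : ℕ} (lam : ℝ) (hl : 0 ≤ lam) (E : Finset (Fin n) → ℝ)
    (hE : ∀ S, 0 ≤ E S) :
    ∑ S : Finset (Fin n), ∑ T : Finset (Fin n),
      (lam ^ S.card * lam ^ T.card) * (E (S \ T) * E (T \ S)) ≤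
    (1 + lam ^ 2) ^ n * (∑ S : Finset (Fin n), lam ^ S.card * E S) ^ 2 := by
  have hR : (1 + lam ^ 2) ^ n * (∑ S : Finset (Fin n), lam ^ S.card * E S) ^ 2 =
      ∑ p : Finset (Fin n) × Finset (Fin n) × Finset (Fin n),
        (lam ^ 2) ^ p.1.card * ((lam ^ p.2.1.card * E p.2.1) * (lam ^ p.2.2.card * E p.2.2)) := by
    have h := Fintype.sum_pow_mul_eq_add_pow (Fin n) (lam ^ 2) 1
    simp only [one_pow, mul_one, Fintype.card_fin] at h
    rw [add_comm 1, ← h, sq (∑ S : Finset (Fin n), lam ^ S.card * E S), Fintype.sum_mul_sum,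
      ← Fintype.sum_prod_type', Fintype.sum_mul_sum, ← Fintype.sum_prod_type']
  rw [hR, ← Fintype.sum_prod_type']
  have hinj : Function.Injective
      (fun p : Finset (Fin n) × Finset (Fin n) => (p.1 ∩ p.2, p.1 \ p.2, p.2 \ p.1)) := by
    rintro ⟨S, T⟩ ⟨S', T'⟩ h
    simp only [Prod.mk.injEq] at h
    obtain ⟨h1, h2, h3⟩ := h
    have a : S = S' := by
      rw [← Finset.sdiff_union_inter S T, ← Finset.sdiff_union_inter S' T', h1, h2]
    have b : T = T' := by
      rw [← Finset.sdiff_union_inter T S, ← Finset.sdiff_union_inter T' S', h3,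
        Finset.inter_comm T S, Finset.inter_comm T' S', h1]
    rw [a, b]
  calc _ = ∑ p : Finset (Fin n) × Finset (Fin n),
        (fun p : Finset (Fin n) × Finset (Fin n) × Finset (Fin n) =>
        (lam ^ 2) ^ p.1.card * ((lam ^ p.2.1.card * E p.2.1) * (lam ^ p.2.2.card * E p.2.2)))
        (p.1 ∩ p.2, p.1 \ p.2, p.2 \ p.1) := by
        refine Finset.sum_congr rfl fun p _ => ?_
        have h1 := Finset.card_sdiff_add_card_inter p.1 p.2
        have h2 := Finset.card_sdiff_add_card_inter p.2 p.1
        rw [Finset.inter_comm] at h2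
        simp only
        rw [← h1, ← h2]
        ring
    _ ≤ _ := by
        rw [← Finset.sum_image (s := Finset.univ)
          (f := fun p : Finset (Fin n) × Finset (Fin n) × Finset (Fin n) =>
            (lam ^ 2) ^ p.1.card * ((lam ^ p.2.1.card * E p.2.1) * (lam ^ p.2.2.card * E p.2.2)))
          (g := fun p : Finset (Fin n) × Finset (Fin n) =>
          (p.1 ∩ p.2, p.1 \ p.2, p.2 \ p.1)) (fun a _ b _ h => hinj h)]
        refine Finset.sum_le_sum_of_subset_of_nonneg (Finset.subset_univ _) fun p _ _ => ?_
        have := hE p.2.1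
        have := hE p.2.2
        positivity

lemma one_add_sq_pow_bound (n : ℕ) (l x : ℝ) (hx : n * l ^ 2 ≤ x) (hx1 : x < 1) :
    (1 + l ^ 2) ^ n - 1 ≤ x / (1 - x) := by
  have h1x : 0 < 1 - x := by linarith
  have hp : 0 ≤ (1 + l ^ 2) ^ n := by positivity
  have key : (1 + l ^ 2) ^ n * (1 - x) ≤ 1 := by
    rcases Nat.eq_zero_or_pos n with rfl | hn
    · simp at hx ⊢
      exact hx
    have hn' : (1:ℝ) ≤ n := by exact_mod_cast hn
    have hl : l ^ 2 < 1 := by nlinarith [sq_nonneg l]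
    have hb := one_add_mul_le_pow (a := -l ^ 2) (by linarith) n
    calc (1 + l ^ 2) ^ n * (1 - x) ≤ (1 + l ^ 2) ^ n * (1 + -l ^ 2) ^ n := by
          refine mul_le_mul_of_nonneg_left ?_ hp
          linarith
      _ = (1 - l ^ 4) ^ n := by rw [← mul_pow]; ring
      _ ≤ 1 := by
          refine pow_le_one₀ ?_ ?_ <;> nlinarith [sq_nonneg l, sq_nonneg (l ^ 2)]
  rw [le_div_iff₀ h1x]
  linarith

/-- Concentration of antiferromagnetic partition functions on graphon-based random graphs:
if `λ(n) ≤ λ₀ n^{−(1+α)/2}`, then for `n > λ₀^{2/α}` the partition function of the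
`w`-random graph on `n` vertices deviates from its mean by a relative `ε` with probability at
most `λ₀² / ((n^α − λ₀²) ε²)`. -/
theorem Zrand_concentration {Xs : Type*} [MeasurableSpace Xs]
    (ξ : Measure Xs) [IsProbabilityMeasure ξ]
    (w : Xs → Xs → ℝ) (hw : Measurable (Function.uncurry w))
    (hw0 : ∀ x y, 0 ≤ w x y) (hw1 : ∀ x y, w x y ≤ 1) (hwsym : ∀ x y, w x y = w y x)
    (u : Measure ℝ) [IsProbabilityMeasure u] (hu : u = volume.restrict (Set.Icc (0:ℝ) 1))
    (lamF : ℕ → ℝ) (hlamF : ∀ m, 0 ≤ lamF m)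
    (lam₀ α : ℝ) (hlam₀ : 0 ≤ lam₀) (hα : 0 < α)
    (hbound : ∀ m : ℕ, lamF m ≤ lam₀ * (m : ℝ) ^ (-(1 + α) / 2))
    (beta : ℝ) (hbeta0 : 0 ≤ beta) (hbeta1 : beta ≤ 1)
    (ε : ℝ) (hε : 0 < ε) (n : ℕ) (hn : lam₀ ^ (2 / α) < (n : ℝ)) :
    ((Measure.pi fun _ : Fin n => ξ).prod (Measure.pi fun _ : Fin n × Fin n => u))
      {ω | ε * (∫ ω', Zrand w (lamF n) beta ω'
              ∂ ((Measure.pi fun _ : Fin n => ξ).prod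
                  (Measure.pi fun _ : Fin n × Fin n => u)))
            ≤ |Zrand w (lamF n) beta ω
                - ∫ ω', Zrand w (lamF n) beta ω'
                    ∂ ((Measure.pi fun _ : Fin n => ξ).prod
                        (Measure.pi fun _ : Fin n × Fin n => u))|}
      ≤ ENNReal.ofReal (lam₀ ^ 2 / (((n : ℝ) ^ α - lam₀ ^ 2) * ε ^ 2)) := by
  set P := ((Measure.pi fun _ : Fin n => ξ).prod (Measure.pi fun _ : Fin n × Fin n => u)) with hP
  set l := lamF n with hl
  have hl0 : 0 ≤ l := hlamF n
  set E : Finset (Fin n) → ℝ := fun S => ∫ ω, fWt w beta S ω ∂P with hEdef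
  have hE : ∀ S, 0 ≤ E S := fun S => integral_nonneg (fWt_nonneg w beta hbeta0 S)
  have hfun : Zrand (n := n) w l beta = fun ω => ∑ S, l ^ S.card * fWt w beta S ω :=
    funext (Zrand_eq w l beta)
  have hmeas : Measurable (Zrand (n := n) w l beta) := by
    rw [hfun]
    exact Finset.measurable_sum _ fun S _ => (fWt_meas w beta hw S).const_mul _
  have hLp : MemLp (Zrand (n := n) w l beta) 2 P := by
    refine MemLp.of_bound hmeas.aestronglyMeasurable (∑ S : Finset (Fin n), l ^ S.card)
      (Filter.Eventually.of_forall fun ω => ?_)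
    rw [hfun]
    simp only
    rw [Real.norm_of_nonneg (Finset.sum_nonneg fun S _ =>
      mul_nonneg (pow_nonneg hl0 _) (fWt_nonneg w beta hbeta0 S ω))]
    exact Finset.sum_le_sum fun S _ => mul_le_of_le_one_right (pow_nonneg hl0 _)
      (fWt_le_one w beta hbeta0 hbeta1 S ω)
  have hmean : ∫ ω, Zrand w l beta ω ∂P = ∑ S, l ^ S.card * E S := by
    rw [hfun, integral_finsetSum _ fun S _ =>
      (fWt_integrable w beta ξ u hw hbeta0 hbeta1 S).const_mul _]
    exact Finset.sum_congr rfl fun S _ => integral_const_mul _ _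
  have hmean1 : 1 ≤ ∫ ω, Zrand w l beta ω ∂P := by
    rw [hmean]
    have h := Finset.single_le_sum (f := fun S : Finset (Fin n) => l ^ S.card * E S)
      (fun S _ => mul_nonneg (pow_nonneg hl0 _) (hE S)) (Finset.mem_univ ∅)
    have h' : E ∅ = 1 := by simp [hEdef, fWt_empty]
    simpa [h'] using h
  have hsq : ∫ ω, (Zrand w l beta ω) ^ 2 ∂P ≤
      (1 + l ^ 2) ^ n * (∫ ω, Zrand w l beta ω ∂P) ^ 2 := by
    have e : ∀ ω, (Zrand (n := n) w l beta ω) ^ 2 = ∑ S : Finset (Fin n), ∑ T : Finset (Fin n),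
        (l ^ S.card * l ^ T.card) * (fWt w beta S ω * fWt w beta T ω) := by
      intro ω
      rw [Zrand_eq, sq, Finset.sum_mul_sum]
      refine Finset.sum_congr rfl fun S _ => Finset.sum_congr rfl fun T _ => ?_
      ring
    simp_rw [e]
    have hint : ∀ S T : Finset (Fin n), Integrable (fun ω =>
        (l ^ S.card * l ^ T.card) * (fWt w beta S ω * fWt w beta T ω)) P := fun S T =>
      (fWt_mul_integrable w beta ξ u hw hbeta0 hbeta1 S T).const_mul _
    rw [integral_finsetSum _ fun S _ => integrable_finsetSum _ fun T _ => hint S T, hmean]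
    refine le_trans (Finset.sum_le_sum fun S _ => ?_) (sum_sdiff_bound l hl0 E hE)
    rw [integral_finsetSum _ fun T _ => hint S T]
    refine Finset.sum_le_sum fun T _ => ?_
    rw [integral_const_mul]
    refine mul_le_mul_of_nonneg_left ?_ (by positivity)
    have hd : Disjoint (S \ T) (T \ S) := disjoint_sdiff_sdiff
    simp only [hEdef]
    rw [← fWt_indep w beta ξ u hw hbeta0 hbeta1 _ _ hd]
    refine integral_mono (fWt_mul_integrable w beta ξ u hw hbeta0 hbeta1 S T)
      (fWt_mul_integrable w beta ξ u hw hbeta0 hbeta1 _ _) fun ω => ?_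
    exact mul_le_mul (fWt_anti w beta hbeta0 hbeta1 Finset.sdiff_subset ω)
      (fWt_anti w beta hbeta0 hbeta1 Finset.sdiff_subset ω)
      (fWt_nonneg w beta hbeta0 _ ω) (fWt_nonneg w beta hbeta0 _ ω)
  set M := ∫ ω, Zrand w l beta ω ∂P with hM
  have hMpos : 0 < M := by linarith
  have hvar : ProbabilityTheory.variance (Zrand (n := n) w l beta) P ≤
      ((1 + l ^ 2) ^ n - 1) * M ^ 2 := by
    rw [ProbabilityTheory.variance_eq_sub hLp]
    have : ∫ ω, (Zrand w l beta ^ 2) ω ∂P = ∫ ω, (Zrand w l beta ω) ^ 2 ∂P := rfl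
    rw [this]
    linarith
  have hnpos : (0:ℝ) < n := lt_of_le_of_lt (Real.rpow_nonneg hlam₀ _) hn
  have hnα : 0 < (n:ℝ) ^ α := Real.rpow_pos_of_pos hnpos _
  have hlt : lam₀ ^ 2 < (n:ℝ) ^ α := by
    have h := Real.rpow_lt_rpow (Real.rpow_nonneg hlam₀ _) hn hα
    rwa [← Real.rpow_mul hlam₀, div_mul_cancel₀ _ hα.ne', Real.rpow_two] at h
  have hx : n * l ^ 2 ≤ lam₀ ^ 2 / (n:ℝ) ^ α := by
    have h := hbound n
    have h2 : l ^ 2 ≤ (lam₀ * (n : ℝ) ^ (-(1 + α) / 2)) ^ 2 := pow_le_pow_left₀ hl0 h 2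
    have h3 : ((n : ℝ) ^ (-(1 + α) / 2)) ^ 2 = ((n:ℝ) * (n:ℝ) ^ α)⁻¹ := by
      rw [← Real.rpow_natCast, ← Real.rpow_mul hnpos.le, ← Real.rpow_one_add' hnpos.le (by linarith),
        ← Real.rpow_neg hnpos.le]
      congr 1
      push_cast
      ring
    rw [mul_pow, h3] at h2
    calc n * l ^ 2 ≤ n * (lam₀ ^ 2 * ((n:ℝ) * (n:ℝ) ^ α)⁻¹) :=
          mul_le_mul_of_nonneg_left h2 hnpos.le
      _ = _ := by field_simp
  have hfin := one_add_sq_pow_bound n l _ hx ((div_lt_one hnα).2 hlt)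
  have hxx : lam₀ ^ 2 / (n:ℝ) ^ α / (1 - lam₀ ^ 2 / (n:ℝ) ^ α) =
      lam₀ ^ 2 / ((n:ℝ) ^ α - lam₀ ^ 2) := by
    have : (n:ℝ) ^ α - lam₀ ^ 2 ≠ 0 := by linarith
    rw [one_sub_div hnα.ne', div_div_div_cancel_right₀ hnα.ne']
  rw [hxx] at hfin
  refine (ProbabilityTheory.meas_ge_le_variance_div_sq hLp (mul_pos hε hMpos)).trans ?_
  refine ENNReal.ofReal_le_ofReal ?_
  rw [← div_div, mul_pow, div_le_div_iff₀ (by positivity) (by positivity)]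
  calc _ ≤ (lam₀ ^ 2 / ((n:ℝ) ^ α - lam₀ ^ 2) * M ^ 2) * ε ^ 2 := by
        refine mul_le_mul_of_nonneg_right ?_ (by positivity)
        exact hvar.trans (mul_le_mul_of_nonneg_right hfin (by positivity))
    _ = _ := by ring
end

section
/- Let G ~ D_n(V, φ) with ν(V) = Vol. For all ε ∈ (0,1], δ ∈ (0,1], and n ≥ 4ε⁻²δ⁻¹ max{e⁶λ²Vol², ln(4ε⁻¹)²}, it holds that Pr[|Z_G(λVol/n) − Ξ(V,λ,φ)| ≥ ε·Ξ(V,λ,φ)] ≤ δ, where Ξ(V,λ,φ) is the Gibbs point process partition function and Z_G the hard-core partition function. -/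
open MeasureTheory

/-- Adjacency in the random graph determined by the outcome `ω`. -/
def edgeOcc {X : Type*} {n : ℕ} (φ : X → X → ℝ)
    (ω : (Fin n → X) × (Fin n × Fin n → ℝ)) (i j : Fin n) : Prop :=
  (i < j ∧ ω.2 (i, j) ≤ 1 - Real.exp (-φ (ω.1 i) (ω.1 j))) ∨
  (j < i ∧ ω.2 (j, i) ≤ 1 - Real.exp (-φ (ω.1 j) (ω.1 i)))

open Classical in
/-- Hard-core partition function of the random graph determined by the outcome `ω`. -/
noncomputable def hcZrand {X : Type*} {n : ℕ} (φ : X → X → ℝ) (z : ℝ)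
    (ω : (Fin n → X) × (Fin n × Fin n → ℝ)) : ℝ :=
  ∑ I : Finset (Fin n),
    if ∀ i ∈ I, ∀ j ∈ I, ¬ edgeOcc φ ω i j then z ^ I.card else 0

/-- Grand-canonical partition function of the repulsive Gibbs point process. -/
noncomputable def gppXi {X : Type*} [MeasurableSpace X] (ν : Measure X) (V : Set X)
    [Fact (ν V < ⊤)] (φ : X → X → ℝ) (lam : ℝ) : ℝ :=
  1 + ∑' k : ℕ, (lam ^ (k + 1) / (Nat.factorial (k + 1) : ℝ)) *
    ∫ y : Fin (k + 1) → X,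
      ∏ q ∈ Finset.univ.filter (fun q : Fin (k + 1) × Fin (k + 1) => q.1 < q.2),
        Real.exp (-φ (y q.1) (y q.2)) ∂ Measure.pi (fun _ : Fin (k + 1) => ν.restrict V)

section helpers
open ProbabilityTheory

/-- Ordered pairs inside a finite set. -/
def prs {n : ℕ} (I : Finset (Fin n)) : Finset (Fin n × Fin n) :=
  (I ×ˢ I).filter (fun q => q.1 < q.2)

/-- Indicator that the pair `q` is not an edge. -/
noncomputable def nonE {X : Type*} {n : ℕ} (φ : X → X → ℝ) (q : Fin n × Fin n)
    (ω : (Fin n → X) × (Fin n × Fin n → ℝ)) : ℝ :=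
  if ω.2 q ≤ 1 - Real.exp (-φ (ω.1 q.1) (ω.1 q.2)) then 0 else 1

/-- Boltzmann weight -/
noncomputable def bw {X : Type*} {k : ℕ} (φ : X → X → ℝ) (y : Fin k → X) : ℝ :=
  ∏ q ∈ Finset.univ.filter (fun q : Fin k × Fin k => q.1 < q.2),
        Real.exp (-φ (y q.1) (y q.2))

noncomputable def pk {X : Type*} [MeasurableSpace X] (μ : Measure X) (φ : X → X → ℝ) (k : ℕ) : ℝ :=
  ∫ y : Fin k → X, bw φ y ∂ Measure.pi (fun _ : Fin k => μ)

noncomputable def indI {X : Type*} {n : ℕ} (φ : X → X → ℝ) (I : Finset (Fin n))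
    (ω : (Fin n → X) × (Fin n × Fin n → ℝ)) : ℝ := ∏ q ∈ prs I, nonE φ q ω

lemma hcZ_eq {X : Type*} {n : ℕ} (φ : X → X → ℝ) (z : ℝ)
    (ω : (Fin n → X) × (Fin n × Fin n → ℝ)) :
    hcZrand φ z ω = ∑ I : Finset (Fin n), z ^ I.card * indI φ I ω := by
  unfold hcZrand indI
  refine Finset.sum_congr rfl fun I _ => ?_
  split_ifs with h
  · rw [Finset.prod_eq_one, mul_one]
    rintro ⟨i, j⟩ hq
    simp only [prs, Finset.mem_filter, Finset.mem_product] at hq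
    have := h i hq.1.1 j hq.1.2
    unfold nonE
    rw [if_neg]
    intro hh
    exact this (Or.inl ⟨hq.2, hh⟩)
  · push Not at h
    obtain ⟨i, hi, j, hj, h⟩ := h
    rw [eq_comm, mul_eq_zero]
    right
    rcases h with h | h
    · exact Finset.prod_eq_zero (i := (i, j)) (by simp [prs, hi, hj, h.1]) (by simp [nonE, h.2])
    · exact Finset.prod_eq_zero (i := (j, i)) (by simp [prs, hi, hj, h.1]) (by simp [nonE, h.2])

lemma nonE_nonneg {X : Type*} {n : ℕ} (φ : X → X → ℝ) (q : Fin n × Fin n)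
    (ω : (Fin n → X) × (Fin n × Fin n → ℝ)) : 0 ≤ nonE φ q ω := by
  unfold nonE; split_ifs <;> norm_num

lemma nonE_le {X : Type*} {n : ℕ} (φ : X → X → ℝ) (q : Fin n × Fin n)
    (ω : (Fin n → X) × (Fin n × Fin n → ℝ)) : nonE φ q ω ≤ 1 := by
  unfold nonE; split_ifs <;> norm_num

lemma nonE_meas {X : Type*} [MeasurableSpace X] {n : ℕ} (φ : X → X → ℝ)
    (hφm : Measurable (Function.uncurry φ)) (q : Fin n × Fin n) :
    Measurable (nonE φ q) := by
  unfold nonE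
  refine Measurable.ite (measurableSet_le (by fun_prop) ?_) measurable_const measurable_const
  have : Measurable fun ω : (Fin n → X) × (Fin n × Fin n → ℝ) =>
      Function.uncurry φ (ω.1 q.1, ω.1 q.2) := hφm.comp (by fun_prop)
  simp only [Function.uncurry] at this
  fun_prop

lemma pnonE_int {X : Type*} [MeasurableSpace X] {n : ℕ} (φ : X → X → ℝ)
    (hφm : Measurable (Function.uncurry φ)) (S : Finset (Fin n × Fin n))
    (P : Measure ((Fin n → X) × (Fin n × Fin n → ℝ))) [IsFiniteMeasure P] :
    Integrable (fun ω => ∏ q ∈ S, nonE φ q ω) P := by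
  refine Integrable.of_bound (C := 1)
    (Finset.measurable_prod _ fun q _ => nonE_meas φ hφm q).aestronglyMeasurable ?_
  refine Filter.Eventually.of_forall fun ω => ?_
  rw [Real.norm_of_nonneg (Finset.prod_nonneg fun q _ => nonE_nonneg φ q ω)]
  exact Finset.prod_le_one (fun q _ => nonE_nonneg φ q ω) (fun q _ => nonE_le φ q ω)

lemma u_int (u : Measure ℝ) (hu : u = volume.restrict (Set.Icc (0:ℝ) 1)) (a : ℝ)
    (ha : 0 ≤ a) (ha1 : a ≤ 1) : ∫ t, (if t ≤ 1 - a then (0:ℝ) else 1) ∂u = a := by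
  have h : (fun t : ℝ => if t ≤ 1 - a then (0:ℝ) else 1) = (Set.Ioi (1 - a)).indicator 1 := by
    ext t
    simp only [Set.indicator, Set.mem_Ioi, Pi.one_apply]
    split_ifs <;> first | rfl | linarith
  rw [h, integral_indicator_one measurableSet_Ioi, hu, measureReal_restrict_apply measurableSet_Ioi]
  have : Set.Ioi (1 - a) ∩ Set.Icc 0 1 = Set.Ioc (1 - a) 1 := by
    ext t
    simp only [Set.mem_inter_iff, Set.mem_Ioi, Set.mem_Icc, Set.mem_Ioc]
    constructor
    · rintro ⟨h, _, h2⟩; exact ⟨h, h2⟩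
    · rintro ⟨h, h2⟩; exact ⟨h, by linarith, h2⟩
  rw [this]
  simp [ha]

lemma pnonE_integral {X : Type*} [MeasurableSpace X] {n : ℕ} (φ : X → X → ℝ)
    (hφm : Measurable (Function.uncurry φ)) (hφ0 : ∀ x y, 0 ≤ φ x y)
    (S : Finset (Fin n × Fin n))
    (μ : Measure X) [IsProbabilityMeasure μ]
    (u : Measure ℝ) [IsProbabilityMeasure u] (hu : u = volume.restrict (Set.Icc (0:ℝ) 1)) :
    ∫ ω, ∏ q ∈ S, nonE φ q ω
      ∂((Measure.pi fun _ : Fin n => μ).prod (Measure.pi fun _ : Fin n × Fin n => u))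
    = ∫ x, ∏ q ∈ S, Real.exp (-φ (x q.1) (x q.2)) ∂(Measure.pi fun _ : Fin n => μ) := by
  rw [integral_prod _ (pnonE_int φ hφm S _)]
  congr 1
  ext x
  classical
  have h : ∀ y : Fin n × Fin n → ℝ, ∏ q ∈ S, nonE φ q (x, y) =
      ∏ q : Fin n × Fin n, (fun (q : Fin n × Fin n) (t : ℝ) =>
        if q ∈ S then (if t ≤ 1 - Real.exp (-φ (x q.1) (x q.2)) then (0:ℝ) else 1) else 1) q (y q) := by
    intro y
    simp only [nonE]
    rw [Finset.prod_ite_mem, Finset.univ_inter]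
  simp_rw [h]
  rw [integral_fintype_prod_eq_prod (E := fun _ : Fin n × Fin n => ℝ)
    (fun (q : Fin n × Fin n) (t : ℝ) =>
        if q ∈ S then (if t ≤ 1 - Real.exp (-φ (x q.1) (x q.2)) then (0:ℝ) else 1) else 1)
    (μ := fun _ => u)]
  rw [← Finset.univ_inter S, ← Finset.prod_ite_mem]
  refine Finset.prod_congr rfl fun q _ => ?_
  simp only [Finset.univ_inter]
  split_ifs
  · exact u_int u hu _ (Real.exp_pos _).le (Real.exp_le_one_iff.2 (by linarith [hφ0 (x q.1) (x q.2)]))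
  · simp

lemma mp_emb {X : Type*} [MeasurableSpace X] {k n : ℕ} (μ : Measure X) [IsProbabilityMeasure μ]
    (e : Fin k → Fin n) (he : Function.Injective e) :
    MeasurePreserving (fun (x : Fin n → X) (i : Fin k) => x (e i))
      (Measure.pi fun _ => μ) (Measure.pi fun _ => μ) := by
  refine ⟨by fun_prop, ?_⟩
  have h := (iIndepFun_pi (μ := fun _ : Fin n => μ) (X := fun _ => id)
    (fun _ => aemeasurable_id)).precomp he
  simp only [id] at h
  rw [iIndepFun_iff_map_fun_eq_pi_map
    (fun i => (measurable_pi_apply (e i)).aemeasurable)] at h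
  rw [h]
  congr 1
  ext1 i
  exact (measurePreserving_eval (fun _ : Fin n => μ) (e i)).map_eq

lemma bw_meas {X : Type*} [MeasurableSpace X] {k : ℕ} (φ : X → X → ℝ)
    (hφm : Measurable (Function.uncurry φ)) : Measurable (bw (k := k) φ) := by
  unfold bw
  refine Finset.measurable_prod _ fun q _ => ?_
  have : Measurable fun y : Fin k → X =>
      Function.uncurry φ (y q.1, y q.2) := hφm.comp (by fun_prop)
  simp only [Function.uncurry] at this
  fun_prop

lemma bw_nonneg {X : Type*} {k : ℕ} (φ : X → X → ℝ) (y : Fin k → X) : 0 ≤ bw φ y :=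
  Finset.prod_nonneg fun _ _ => (Real.exp_pos _).le

lemma bw_le {X : Type*} {k : ℕ} (φ : X → X → ℝ) (hφ0 : ∀ x y, 0 ≤ φ x y) (y : Fin k → X) :
    bw φ y ≤ 1 :=
  Finset.prod_le_one (fun _ _ => (Real.exp_pos _).le)
    fun q _ => Real.exp_le_one_iff.2 (by linarith [hφ0 (y q.1) (y q.2)])

lemma bw_int {X : Type*} [MeasurableSpace X] {k : ℕ} (φ : X → X → ℝ)
    (hφm : Measurable (Function.uncurry φ)) (hφ0 : ∀ x y, 0 ≤ φ x y)
    (P : Measure (Fin k → X)) [IsFiniteMeasure P] : Integrable (bw φ) P := by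
  refine Integrable.of_bound (C := 1) (bw_meas φ hφm).aestronglyMeasurable ?_
  refine Filter.Eventually.of_forall fun ω => ?_
  rw [Real.norm_of_nonneg (bw_nonneg _ _)]
  exact bw_le φ hφ0 _

lemma prs_prod {X : Type*} {n : ℕ} (φ : X → X → ℝ) (I : Finset (Fin n)) (x : Fin n → X) :
    ∏ q ∈ prs I, Real.exp (-φ (x q.1) (x q.2)) =
      bw φ (fun i : Fin I.card => x (I.orderEmbOfFin rfl i)) := by
  unfold bw
  symm
  refine Finset.prod_nbij (fun q => (I.orderEmbOfFin rfl q.1, I.orderEmbOfFin rfl q.2)) ?_ ?_ ?_ ?_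
  · intro q hq
    simp only [Finset.mem_filter, Finset.mem_univ, true_and] at hq
    simp [prs, hq]
  · rintro ⟨a, b⟩ _ ⟨c, d⟩ _ h
    simpa using h
  · rintro ⟨i, j⟩ h
    simp only [prs, Finset.coe_filter, Finset.mem_product, Set.mem_ofPred_eq] at h
    have hr := Finset.range_orderEmbOfFin I rfl
    obtain ⟨a, ha⟩ : i ∈ Set.range (I.orderEmbOfFin rfl) := by rw [hr]; exact h.1.1
    obtain ⟨b, hb⟩ : j ∈ Set.range (I.orderEmbOfFin rfl) := by rw [hr]; exact h.1.2
    refine ⟨(a, b), ?_, by simp [ha, hb]⟩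
    have := h.2
    rw [← ha, ← hb] at this
    simpa using this
  · intro q _; rfl

lemma bw_emb {X : Type*} [MeasurableSpace X] {k n : ℕ} (μ : Measure X) [IsProbabilityMeasure μ]
    (φ : X → X → ℝ) (hφm : Measurable (Function.uncurry φ))
    (e : Fin k → Fin n) (he : Function.Injective e) :
    ∫ x : Fin n → X, bw φ (fun i => x (e i)) ∂(Measure.pi fun _ => μ) = pk μ φ k := by
  have h := mp_emb μ e he
  unfold pk
  rw [← h.map_eq, integral_map h.measurable.aemeasurable (bw_meas φ hφm).aestronglyMeasurable]

lemma pk_anti {X : Type*} [MeasurableSpace X] (μ : Measure X) [IsProbabilityMeasure μ]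
    (φ : X → X → ℝ) (hφm : Measurable (Function.uncurry φ)) (hφ0 : ∀ x y, 0 ≤ φ x y)
    {k m : ℕ} (hkm : k ≤ m) : pk μ φ m ≤ pk μ φ k := by
  have he : Function.Injective (Fin.castLE hkm) := Fin.castLE_injective hkm
  rw [← bw_emb μ φ hφm _ he]
  refine integral_mono (bw_int φ hφm hφ0 _)
    (((mp_emb μ _ he).integrable_comp (bw_int φ hφm hφ0 _).aestronglyMeasurable).2
      (bw_int φ hφm hφ0 _)) fun x => ?_
  unfold bw
  have : ∏ q ∈ Finset.univ.filter (fun q : Fin k × Fin k => q.1 < q.2),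
      Real.exp (-φ (x (Fin.castLE hkm q.1)) (x (Fin.castLE hkm q.2))) =
      ∏ q ∈ (Finset.univ.filter (fun q : Fin k × Fin k => q.1 < q.2)).map
        ⟨fun q => (Fin.castLE hkm q.1, Fin.castLE hkm q.2), by
          rintro ⟨a, b⟩ ⟨c, d⟩ h; simpa using h⟩, Real.exp (-φ (x q.1) (x q.2)) := by
    rw [Finset.prod_map]; rfl
  rw [this]
  rw [← Finset.prod_sdiff (s₁ := Finset.map _ _)
    (s₂ := Finset.univ.filter (fun q : Fin m × Fin m => q.1 < q.2))]
  · refine mul_le_of_le_one_left (Finset.prod_nonneg fun _ _ => (Real.exp_pos _).le) ?_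
    exact Finset.prod_le_one (fun _ _ => (Real.exp_pos _).le)
      fun q _ => Real.exp_le_one_iff.2 (by linarith [hφ0 (x q.1) (x q.2)])
  · intro q hq
    simp only [Finset.mem_map, Finset.mem_filter, Finset.mem_univ, true_and,
      Prod.exists] at hq ⊢
    obtain ⟨a, b, ha, rfl⟩ := hq
    exact ha

lemma pk_nonneg {X : Type*} [MeasurableSpace X] (μ : Measure X)
    (φ : X → X → ℝ) (k : ℕ) : 0 ≤ pk μ φ k := integral_nonneg fun _ => bw_nonneg _ _

lemma pk_zero {X : Type*} [MeasurableSpace X] (μ : Measure X) [IsProbabilityMeasure μ]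
    (φ : X → X → ℝ) : pk μ φ 0 = 1 := by
  simp [pk, bw]

lemma indI_integral {X : Type*} [MeasurableSpace X] {n : ℕ} (φ : X → X → ℝ)
    (hφm : Measurable (Function.uncurry φ)) (hφ0 : ∀ x y, 0 ≤ φ x y)
    (I : Finset (Fin n))
    (μ : Measure X) [IsProbabilityMeasure μ]
    (u : Measure ℝ) [IsProbabilityMeasure u] (hu : u = volume.restrict (Set.Icc (0:ℝ) 1)) :
    ∫ ω, indI φ I ω
      ∂((Measure.pi fun _ : Fin n => μ).prod (Measure.pi fun _ : Fin n × Fin n => u))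
    = pk μ φ I.card := by
  unfold indI
  rw [pnonE_integral φ hφm hφ0 _ μ u hu]
  simp_rw [prs_prod]
  exact bw_emb μ φ hφm _ (I.orderEmbOfFin rfl).injective

lemma prs_disj {n : ℕ} {I J : Finset (Fin n)} (h : Disjoint I J) : Disjoint (prs I) (prs J) := by
  rw [Finset.disjoint_left] at h ⊢
  intro q hq hq2
  simp only [prs, Finset.mem_filter, Finset.mem_product] at hq hq2
  exact h hq.1.1 hq2.1.1

lemma indI_mul_integral {X : Type*} [MeasurableSpace X] {n : ℕ} (φ : X → X → ℝ)
    (hφm : Measurable (Function.uncurry φ)) (hφ0 : ∀ x y, 0 ≤ φ x y)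
    (I J : Finset (Fin n)) (hd : Disjoint I J)
    (μ : Measure X) [IsProbabilityMeasure μ]
    (u : Measure ℝ) [IsProbabilityMeasure u] (hu : u = volume.restrict (Set.Icc (0:ℝ) 1)) :
    ∫ ω, indI φ I ω * indI φ J ω
      ∂((Measure.pi fun _ : Fin n => μ).prod (Measure.pi fun _ : Fin n × Fin n => u))
    = pk μ φ I.card * pk μ φ J.card := by
  classical
  unfold indI
  simp_rw [← Finset.prod_union (prs_disj hd)]
  rw [pnonE_integral φ hφm hφ0 _ μ u hu]
  simp_rw [Finset.prod_union (prs_disj hd), prs_prod]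
  have h := (iIndepFun_pi (μ := fun _ : Fin n => μ) (X := fun _ => id)
    (fun _ => aemeasurable_id)).indepFun_finset I J hd (fun i => by fun_prop)
  simp only [id] at h
  have h2 := h.comp
    (φ := fun y : I → X => bw φ (fun k => y ⟨I.orderEmbOfFin rfl k, I.orderEmbOfFin_mem rfl k⟩))
    (ψ := fun y : J → X => bw φ (fun k => y ⟨J.orderEmbOfFin rfl k, J.orderEmbOfFin_mem rfl k⟩))
    ((bw_meas φ hφm).comp (by fun_prop)) ((bw_meas φ hφm).comp (by fun_prop))
  have h3 := h2.integral_fun_mul_eq_mul_integral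
    (((bw_meas φ hφm).comp (by fun_prop)).aestronglyMeasurable)
    (((bw_meas φ hφm).comp (by fun_prop)).aestronglyMeasurable)
  rw [← bw_emb μ φ hφm _ (I.orderEmbOfFin rfl).injective,
    ← bw_emb μ φ hφm _ (J.orderEmbOfFin rfl).injective]
  exact h3
lemma indI_nonneg {X : Type*} {n : ℕ} (φ : X → X → ℝ) (I : Finset (Fin n))
    (ω : (Fin n → X) × (Fin n × Fin n → ℝ)) : 0 ≤ indI φ I ω :=
  Finset.prod_nonneg fun q _ => nonE_nonneg φ q ω

lemma indI_anti {X : Type*} {n : ℕ} (φ : X → X → ℝ) {I J : Finset (Fin n)} (h : I ⊆ J)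
    (ω : (Fin n → X) × (Fin n × Fin n → ℝ)) : indI φ J ω ≤ indI φ I ω := by
  unfold indI
  have hs : prs I ⊆ prs J := by
    intro q hq
    simp only [prs, Finset.mem_filter, Finset.mem_product] at hq ⊢
    exact ⟨⟨h hq.1.1, h hq.1.2⟩, hq.2⟩
  rw [← Finset.prod_sdiff hs]
  refine mul_le_of_le_one_left (Finset.prod_nonneg fun q _ => nonE_nonneg φ q ω) ?_
  exact Finset.prod_le_one (fun q _ => nonE_nonneg φ q ω) (fun q _ => nonE_le φ q ω)

lemma indI_int {X : Type*} [MeasurableSpace X] {n : ℕ} (φ : X → X → ℝ)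
    (hφm : Measurable (Function.uncurry φ)) (I : Finset (Fin n))
    (P : Measure ((Fin n → X) × (Fin n × Fin n → ℝ))) [IsFiniteMeasure P] :
    Integrable (fun ω => indI φ I ω) P := pnonE_int φ hφm (prs I) P

lemma indI_mul_int {X : Type*} [MeasurableSpace X] {n : ℕ} (φ : X → X → ℝ)
    (hφm : Measurable (Function.uncurry φ)) (I J : Finset (Fin n))
    (P : Measure ((Fin n → X) × (Fin n × Fin n → ℝ))) [IsFiniteMeasure P] :
    Integrable (fun ω => indI φ I ω * indI φ J ω) P := by
  have hi := pnonE_int φ hφm (prs I) P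
  have hj := pnonE_int φ hφm (prs J) P
  refine hi.mul_bdd (c := 1) hj.aestronglyMeasurable ?_
  refine Filter.Eventually.of_forall fun ω => ?_
  unfold indI
  rw [Real.norm_of_nonneg (Finset.prod_nonneg fun q _ => nonE_nonneg φ q ω)]
  exact Finset.prod_le_one (fun q _ => nonE_nonneg φ q ω) (fun q _ => nonE_le φ q ω)

/-- First moment. -/
lemma EZ {X : Type*} [MeasurableSpace X] {n : ℕ} (φ : X → X → ℝ)
    (hφm : Measurable (Function.uncurry φ)) (hφ0 : ∀ x y, 0 ≤ φ x y) (z : ℝ)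
    (μ : Measure X) [IsProbabilityMeasure μ]
    (u : Measure ℝ) [IsProbabilityMeasure u] (hu : u = volume.restrict (Set.Icc (0:ℝ) 1)) :
    ∫ ω, hcZrand φ z ω
      ∂((Measure.pi fun _ : Fin n => μ).prod (Measure.pi fun _ : Fin n × Fin n => u))
    = ∑ I : Finset (Fin n), z ^ I.card * pk μ φ I.card := by
  simp_rw [hcZ_eq]
  rw [integral_finsetSum _ (fun I _ => (indI_int φ hφm I _).const_mul _)]
  refine Finset.sum_congr rfl fun I _ => ?_
  rw [integral_const_mul, indI_integral φ hφm hφ0 I μ u hu]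

lemma Z_int {X : Type*} [MeasurableSpace X] {n : ℕ} (φ : X → X → ℝ)
    (hφm : Measurable (Function.uncurry φ)) (z : ℝ)
    (P : Measure ((Fin n → X) × (Fin n × Fin n → ℝ))) [IsFiniteMeasure P] :
    Integrable (fun ω => hcZrand φ z ω) P := by
  simp_rw [hcZ_eq]
  exact integrable_finsetSum _ (fun I _ => (indI_int φ hφm I _).const_mul _)

lemma Zsq_eq {X : Type*} {n : ℕ} (φ : X → X → ℝ) (z : ℝ)
    (ω : (Fin n → X) × (Fin n × Fin n → ℝ)) :
    hcZrand φ z ω ^ 2 = ∑ I : Finset (Fin n), ∑ J : Finset (Fin n),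
      (z ^ I.card * z ^ J.card) * (indI φ I ω * indI φ J ω) := by
  rw [hcZ_eq, sq, Finset.sum_mul_sum]
  refine Finset.sum_congr rfl fun I _ => Finset.sum_congr rfl fun J _ => by ring

lemma Zsq_int {X : Type*} [MeasurableSpace X] {n : ℕ} (φ : X → X → ℝ)
    (hφm : Measurable (Function.uncurry φ)) (z : ℝ)
    (P : Measure ((Fin n → X) × (Fin n × Fin n → ℝ))) [IsFiniteMeasure P] :
    Integrable (fun ω => hcZrand φ z ω ^ 2) P := by
  simp_rw [Zsq_eq]
  exact integrable_finsetSum _ (fun I _ => integrable_finsetSum _ fun J _ =>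
    (indI_mul_int φ hφm I J P).const_mul _)

/-- Second moment. -/
lemma EZsq {X : Type*} [MeasurableSpace X] {n : ℕ} (φ : X → X → ℝ)
    (hφm : Measurable (Function.uncurry φ)) (hφ0 : ∀ x y, 0 ≤ φ x y) (z : ℝ) (hz : 0 ≤ z)
    (μ : Measure X) [IsProbabilityMeasure μ]
    (u : Measure ℝ) [IsProbabilityMeasure u] (hu : u = volume.restrict (Set.Icc (0:ℝ) 1)) :
    ∫ ω, hcZrand φ z ω ^ 2
      ∂((Measure.pi fun _ : Fin n => μ).prod (Measure.pi fun _ : Fin n × Fin n => u))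
    ≤ (1 + z ^ 2) ^ n * (∑ I : Finset (Fin n), z ^ I.card * pk μ φ I.card) ^ 2 := by
  classical
  simp_rw [Zsq_eq]
  rw [integral_finsetSum _ (fun I _ => integrable_finsetSum _ fun J _ =>
    (indI_mul_int φ hφm I J _).const_mul _)]
  simp_rw [fun I : Finset (Fin n) => integral_finsetSum
    (μ := (Measure.pi fun _ : Fin n => μ).prod (Measure.pi fun _ : Fin n × Fin n => u))
    Finset.univ (f := fun J ω => (z ^ I.card * z ^ J.card) * (indI φ I ω * indI φ J ω))
    (fun J _ => (indI_mul_int φ hφm I J _).const_mul _), integral_const_mul]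
  let F : Finset (Fin n) × Finset (Fin n) × Finset (Fin n) → ℝ := fun t =>
    (z ^ 2) ^ t.1.card * ((z ^ t.2.1.card * pk μ φ t.2.1.card) *
      (z ^ t.2.2.card * pk μ φ t.2.2.card))
  let g : Finset (Fin n) × Finset (Fin n) → Finset (Fin n) × Finset (Fin n) × Finset (Fin n) :=
    fun s => (s.1 ∩ s.2, s.1 \ s.2, s.2 \ s.1)
  have hg : Function.Injective g := by
    rintro ⟨I, J⟩ ⟨I', J'⟩ h
    simp only [g, Prod.mk.injEq] at h
    obtain ⟨h1, h2, h3⟩ := h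
    have e1 : I = I' := by
      rw [← Finset.sdiff_union_inter I J, ← Finset.sdiff_union_inter I' J', h1, h2]
    have e2 : J = J' := by
      rw [← Finset.sdiff_union_inter J I, ← Finset.sdiff_union_inter J' I', h3,
        Finset.inter_comm J I, Finset.inter_comm J' I', h1]
    rw [e1, e2]
  have hF : ∀ t, 0 ≤ F t := fun t => by
    have h1 := pk_nonneg μ φ t.2.1.card
    have h2 := pk_nonneg μ φ t.2.2.card
    simp only [F]; positivity
  calc _ ≤ ∑ I : Finset (Fin n), ∑ J : Finset (Fin n), F (g (I, J)) := by
        refine Finset.sum_le_sum fun I _ => Finset.sum_le_sum fun J _ => ?_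
        have hd : Disjoint (I \ J) (J \ I) := disjoint_sdiff_sdiff
        have h1 : ∫ ω, indI φ I ω * indI φ J ω
            ∂((Measure.pi fun _ : Fin n => μ).prod (Measure.pi fun _ : Fin n × Fin n => u))
            ≤ pk μ φ (I \ J).card * pk μ φ (J \ I).card := by
          rw [← indI_mul_integral φ hφm hφ0 _ _ hd μ u hu]
          refine integral_mono (indI_mul_int φ hφm I J _) (indI_mul_int φ hφm _ _ _) fun ω => ?_
          exact mul_le_mul (indI_anti φ Finset.sdiff_subset ω) (indI_anti φ Finset.sdiff_subset ω)
            (indI_nonneg _ _ _) (indI_nonneg _ _ _)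
        have hI : z ^ I.card = z ^ (I \ J).card * z ^ (I ∩ J).card := by
          rw [← pow_add, Finset.card_sdiff_add_card_inter]
        have hJ : z ^ J.card = z ^ (J \ I).card * z ^ (I ∩ J).card := by
          rw [← pow_add, Finset.inter_comm, Finset.card_sdiff_add_card_inter]
        calc _ ≤ (z ^ I.card * z ^ J.card) * (pk μ φ (I \ J).card * pk μ φ (J \ I).card) := by
              gcongr
          _ = F (g (I, J)) := by
              simp only [F, g]; rw [hI, hJ, ← pow_mul, mul_comm 2, pow_mul]; ring
    _ = ∑ t ∈ Finset.univ.image g, F t := by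
        rw [Finset.sum_image (fun a _ b _ h => hg h), Fintype.sum_prod_type]
    _ ≤ ∑ t, F t := Finset.sum_le_sum_of_subset_of_nonneg (Finset.subset_univ _) fun t _ _ => hF t
    _ = (∑ A : Finset (Fin n), (z ^ 2) ^ A.card) *
          (∑ I : Finset (Fin n), z ^ I.card * pk μ φ I.card) ^ 2 := by
        rw [sq (∑ I : Finset (Fin n), z ^ I.card * pk μ φ I.card), Finset.sum_mul_sum,
          ← Fintype.sum_prod_type', Finset.sum_mul_sum, ← Fintype.sum_prod_type']
    _ = _ := by
        have := Fintype.sum_pow_mul_eq_add_pow (Fin n) (z ^ 2) 1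
        simp only [one_pow, mul_one, Fintype.card_fin] at this
        rw [this, add_comm]

lemma EZ_choose (n : ℕ) (z : ℝ) (p : ℕ → ℝ) :
    ∑ I : Finset (Fin n), z ^ I.card * p I.card
      = ∑ k ∈ Finset.range (n + 1), (n.choose k : ℝ) * (z ^ k * p k) := by
  have := Finset.sum_powerset_apply_card (fun k => z ^ k * p k) (x := (Finset.univ : Finset (Fin n)))
  simpa using this

lemma desc_le (n k : ℕ) (hn : 0 < n) : (n.descFactorial k : ℝ) / (n:ℝ) ^ k ≤ 1 := by
  rw [div_le_one (by positivity)]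
  exact_mod_cast Nat.descFactorial_le_pow n k

lemma desc_ge (n k : ℕ) (hn : 0 < n) :
    1 - (k : ℝ) * (k - 1) / n ≤ (n.descFactorial k : ℝ) / (n:ℝ) ^ k := by
  have hn' : (0:ℝ) < n := by exact_mod_cast hn
  induction k with
  | zero => simp
  | succ k ih =>
    have hd := desc_le n k hn
    have hd0 : 0 ≤ (n.descFactorial k : ℝ) / (n:ℝ) ^ k := by positivity
    set d := (n.descFactorial k : ℝ) / (n:ℝ) ^ k with hdd
    rcases le_or_gt k n with h | h
    · have e : (n.descFactorial (k + 1) : ℝ) / (n:ℝ) ^ (k + 1) = (1 - k / n) * d := by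
        rw [Nat.descFactorial_succ, hdd]
        push_cast [h]
        rw [pow_succ]
        field_simp
      rw [e]
      have hk : (0:ℝ) ≤ k / n := by positivity
      have : (↑(k + 1) : ℝ) * (↑(k + 1) - 1) / n = (k:ℝ) * (k - 1) / n + 2 * (k / n) := by
        push_cast; field_simp; ring
      rw [this]
      nlinarith
    · have h' : (n:ℝ) < k := by exact_mod_cast h
      have : (0:ℝ) ≤ (n.descFactorial (k + 1) : ℝ) / (n:ℝ) ^ (k + 1) := by positivity
      refine le_trans ?_ this
      rw [sub_nonpos, le_div_iff₀ hn']
      push_cast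
      have : (1:ℝ) ≤ n := by exact_mod_cast hn
      nlinarith

lemma a_summable (p : ℕ → ℝ) (hp0 : ∀ k, 0 ≤ p k) (hpz : p 0 = 1)
    (hpa : ∀ k m, k ≤ m → p m ≤ p k) (L : ℝ) (hL : 0 ≤ L) :
    Summable fun k : ℕ => L ^ k / (k.factorial : ℝ) * p k := by
  refine Summable.of_nonneg_of_le (fun k => ?_) (fun k => ?_) (Real.summable_pow_div_factorial L)
  · have := hp0 k; positivity
  · have := hpa 0 k (Nat.zero_le _)
    rw [hpz] at this
    exact mul_le_of_le_one_right (by positivity) this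

lemma bias (p : ℕ → ℝ) (hp0 : ∀ k, 0 ≤ p k) (hpz : p 0 = 1)
    (hpa : ∀ k m, k ≤ m → p m ≤ p k) (L : ℝ) (hL : 0 ≤ L) (n : ℕ) (hn : 0 < n) :
    (∑ k ∈ Finset.range (n + 1), (n.choose k : ℝ) * ((L / n) ^ k * p k)
      ≤ ∑' k : ℕ, L ^ k / (k.factorial : ℝ) * p k) ∧
    (1 - L ^ 2 / n) * ∑' k : ℕ, L ^ k / (k.factorial : ℝ) * p k
      ≤ ∑ k ∈ Finset.range (n + 1), (n.choose k : ℝ) * ((L / n) ^ k * p k) := by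
  have hn' : (0:ℝ) < n := by exact_mod_cast hn
  have ha := a_summable p hp0 hpz hpa L hL
  set a : ℕ → ℝ := fun k => L ^ k / (k.factorial : ℝ) * p k with had
  have ha0 : ∀ k, 0 ≤ a k := fun k => by have := hp0 k; simp only [had]; positivity
  set c : ℕ → ℝ := fun k => (n.choose k : ℝ) * ((L / n) ^ k * p k) with hcd
  have hc : ∀ k, c k = a k * ((n.descFactorial k : ℝ) / (n:ℝ) ^ k) := by
    intro k
    simp only [hcd, had]
    rw [Nat.descFactorial_eq_factorial_mul_choose]
    push_cast
    rw [div_pow]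
    field_simp
  have hcs : HasSum c (∑ k ∈ Finset.range (n + 1), c k) := by
    refine hasSum_sum_of_ne_finset_zero fun k hk => ?_
    simp only [Finset.mem_range, not_lt] at hk
    simp [hcd, Nat.choose_eq_zero_of_lt (show n < k by omega)]
  have hle : ∀ k, c k ≤ a k := fun k => by
    rw [hc]; exact mul_le_of_le_one_right (ha0 k) (desc_le n k hn)
  have hdiff : ∀ k, a k - c k ≤ a k * ((k : ℝ) * (k - 1) / n) := fun k => by
    rw [hc]
    have := mul_le_mul_of_nonneg_left (desc_ge n k hn) (ha0 k)
    linarith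
  rw [← hcs.tsum_eq]
  refine ⟨hcs.summable.tsum_le_tsum hle ha, ?_⟩
  have hs : Summable fun k => a k - c k := ha.sub hcs.summable
  have h1 : ∑' k, (a k - c k) = ∑' k, a k - ∑' k, c k := ha.tsum_sub hcs.summable
  have h2 := hs.sum_add_tsum_nat_add 2
  have h3 : ∑' k, (a (k + 2) - c (k + 2)) ≤ ∑' k, L ^ 2 / n * a k := by
    refine ((summable_nat_add_iff 2).2 hs).tsum_le_tsum (fun k => ?_) (ha.mul_left _)
    refine (hdiff (k + 2)).trans ?_
    have hpp := hpa k (k + 2) (by omega)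
    have e : a (k + 2) * ((↑(k + 2) : ℝ) * (↑(k + 2) - 1) / n) =
        L ^ 2 / n * (L ^ k / (k.factorial : ℝ) * p (k + 2)) := by
      simp only [had, Nat.factorial_succ]
      push_cast
      field_simp
      ring
    rw [e]
    simp only [had]
    gcongr
  have h4 : ∑ k ∈ Finset.range 2, (a k - c k) ≤ 0 := by
    have d0 := hdiff 0
    have d1 := hdiff 1
    simp at d0 d1
    simp [Finset.sum_range_succ]
    linarith
  rw [tsum_mul_left] at h3
  linarith

lemma pi_restrict {X : Type*} [MeasurableSpace X]
    (ν : Measure X) (V : Set X) (hfin : ν V < ⊤) (hV0 : ν V ≠ 0)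
    (μ : Measure X) [IsProbabilityMeasure μ] (hμ : μ = (ν V)⁻¹ • ν.restrict V) (k : ℕ) :
    Measure.pi (fun _ : Fin k => ν.restrict V) = (ν V) ^ k • Measure.pi (fun _ : Fin k => μ) := by
  have : IsFiniteMeasure (ν.restrict V) := ⟨by simpa using hfin⟩
  have h : ν.restrict V = ν V • μ := by
    rw [hμ, smul_smul, ENNReal.mul_inv_cancel hV0 hfin.ne, one_smul]
  refine Measure.pi_eq fun s hs => ?_
  rw [Measure.smul_apply, Measure.pi_pi, h]
  simp [Finset.prod_mul_distrib]

lemma gpp_eq {X : Type*} [MeasurableSpace X]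
    (ν : Measure X) (V : Set X) [hfin : Fact (ν V < ⊤)] (hV0 : ν V ≠ 0)
    (φ : X → X → ℝ) (hφm : Measurable (Function.uncurry φ)) (hφ0 : ∀ x y, 0 ≤ φ x y)
    (lam : ℝ) (hlam : 0 ≤ lam)
    (μ : Measure X) [IsProbabilityMeasure μ] (hμ : μ = (ν V)⁻¹ • ν.restrict V) :
    gppXi ν V φ lam = ∑' k : ℕ, (lam * (ν V).toReal) ^ k / (k.factorial : ℝ) * pk μ φ k := by
  have hs := a_summable (pk μ φ) (pk_nonneg μ φ) (pk_zero μ φ)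
    (fun k m h => pk_anti μ φ hφm hφ0 h) (lam * (ν V).toReal) (by positivity)
  rw [hs.tsum_eq_zero_add]
  unfold gppXi
  congr 1
  · simp [pk_zero]
  · congr 1
    ext k
    rw [pi_restrict ν V hfin.out hV0 μ hμ, integral_smul_measure]
    simp only [ENNReal.toReal_pow, smul_eq_mul]
    unfold pk bw
    rw [mul_pow]
    ring

end helpers

/-- Concentration of the hard-core partition function of the geometric random graph
`G ~ D_n(V, φ)` around the Gibbs point process partition function `Ξ(V, λ, φ)`: for
`n ≥ 4 ε⁻² δ⁻¹ max{e⁶ λ² Vol², ln(4 ε⁻¹)²}`,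
`Pr[|Z_G(λ Vol / n) − Ξ| ≥ ε Ξ] ≤ δ`. -/
theorem hcZrand_concentration_around_gppXi {X : Type*} [MeasurableSpace X]
    (ν : Measure X) (V : Set X) (hV : MeasurableSet V)
    [Fact (ν V < ⊤)] (hV0 : ν V ≠ 0)
    (φ : X → X → ℝ) (hφm : Measurable (Function.uncurry φ))
    (hφ0 : ∀ x y, 0 ≤ φ x y) (hφsym : ∀ x y, φ x y = φ y x)
    (lam : ℝ) (hlam : 0 ≤ lam)
    (μ : Measure X) [IsProbabilityMeasure μ] (hμ : μ = (ν V)⁻¹ • ν.restrict V)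
    (u : Measure ℝ) [IsProbabilityMeasure u] (hu : u = volume.restrict (Set.Icc (0:ℝ) 1))
    (ε δ : ℝ) (hε : 0 < ε) (hε1 : ε ≤ 1) (hδ : 0 < δ) (hδ1 : δ ≤ 1) (n : ℕ)
    (hn : 4 * ε⁻¹ ^ 2 * δ⁻¹ * max (Real.exp 6 * lam ^ 2 * (ν V).toReal ^ 2)
        ((Real.log (4 * ε⁻¹)) ^ 2) ≤ n) :
    ((Measure.pi fun _ : Fin n => μ).prod (Measure.pi fun _ : Fin n × Fin n => u))
      {ω | ε * gppXi ν V φ lam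
            ≤ |hcZrand φ (lam * (ν V).toReal / n) ω - gppXi ν V φ lam|}
      ≤ ENNReal.ofReal δ := by
  have hfin : ν V < ⊤ := Fact.out
  have hXi := gpp_eq ν V hV0 φ hφm hφ0 lam hlam μ hμ
  set Ξ := gppXi ν V φ lam with hΞ
  set L := lam * (ν V).toReal with hLd
  have hL : 0 ≤ L := by positivity
  have hlog : 0 < Real.log (4 * ε⁻¹) := by
    apply Real.log_pos
    have : 1 ≤ ε⁻¹ := (one_le_inv₀ hε).2 hε1
    linarith
  have hnpos : (0:ℝ) < n := by
    refine lt_of_lt_of_le ?_ hn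
    have : 0 < max (Real.exp 6 * lam ^ 2 * (ν V).toReal ^ 2) ((Real.log (4 * ε⁻¹)) ^ 2) :=
      lt_max_of_lt_right (by positivity)
    positivity
  have hn0 : 0 < n := by exact_mod_cast hnpos
  have hp := fun k m h => pk_anti μ φ hφm hφ0 (k := k) (m := m) h
  obtain ⟨hb1, hb2⟩ := bias (pk μ φ) (pk_nonneg μ φ) (pk_zero μ φ) hp L hL n hn0
  have hXi1 : 1 ≤ Ξ := by
    rw [hXi]
    have := (a_summable (pk μ φ) (pk_nonneg μ φ) (pk_zero μ φ) hp L hL).le_tsum 0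
      (fun k _ => by have := pk_nonneg μ φ k; positivity)
    simpa [pk_zero] using this
  rw [← hXi, ← EZ_choose] at hb1 hb2
  have hE := EZ (n := n) φ hφm hφ0 (L / n) μ u hu
  have hE2 := EZsq (n := n) φ hφm hφ0 (L / n) (by positivity) μ u hu
  set M := ∑ I : Finset (Fin n), (L / n) ^ I.card * pk μ φ I.card with hM
  set P := (Measure.pi fun _ : Fin n => μ).prod (Measure.pi fun _ : Fin n × Fin n => u) with hP
  set t := L ^ 2 / n with ht
  have ht0 : 0 ≤ t := by positivity
  have hM0 : 0 ≤ M := Finset.sum_nonneg fun I _ => by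
    have := pk_nonneg μ φ I.card; positivity
  -- bound on `t`
  have hexp6 : 6 ≤ Real.exp 6 := by linarith [Real.add_one_le_exp (6:ℝ)]
  have htb : 24 * t ≤ ε ^ 2 * δ := by
    have h1 : 4 * ε⁻¹ ^ 2 * δ⁻¹ * (6 * L ^ 2) ≤ n := by
      refine le_trans ?_ hn
      gcongr
      refine le_trans ?_ (le_max_left _ _)
      rw [hLd, mul_pow, ← mul_assoc]
      gcongr
    have h2 : 24 * L ^ 2 ≤ ε ^ 2 * δ * n := by
      have h3 := mul_le_mul_of_nonneg_left h1 (show 0 ≤ ε ^ 2 * δ by positivity)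
      refine le_trans (le_of_eq ?_) h3
      field_simp
      ring
    rw [ht, ← mul_div_assoc, div_le_iff₀ hnpos]
    exact h2
  have ht1 : t ≤ 1 := by
    have : ε ^ 2 * δ ≤ 1 := mul_le_one₀ (pow_le_one₀ hε.le hε1) hδ.le hδ1
    linarith
  have het : (1 + (L / n) ^ 2) ^ n ≤ 1 + 2 * t := by
    have h1 : (1 + (L / n) ^ 2) ^ n ≤ Real.exp t := by
      have : 1 + (L / n) ^ 2 ≤ Real.exp ((L / n) ^ 2) := by
        linarith [Real.add_one_le_exp ((L / n) ^ 2)]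
      calc _ ≤ (Real.exp ((L / n) ^ 2)) ^ n := by gcongr
        _ = Real.exp t := by
          rw [← Real.exp_nat_mul, ht]
          congr 1
          field_simp
    have h2 := Real.abs_exp_sub_one_le (x := t) (by rwa [abs_of_nonneg ht0])
    rw [abs_of_nonneg ht0] at h2
    linarith [le_abs_self (Real.exp t - 1)]
  have hZ := Z_int (n := n) φ hφm (L / n) P
  have hZ2 := Zsq_int (n := n) φ hφm (L / n) P
  have hint : Integrable (fun ω => (hcZrand φ (L / n) ω - Ξ) ^ 2) P := by
    have : (fun ω => (hcZrand φ (L / n) ω - Ξ) ^ 2) =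
      fun ω : (Fin n → X) × (Fin n × Fin n → ℝ) =>
        hcZrand φ (L / n) ω ^ 2 - 2 * Ξ * hcZrand φ (L / n) ω + Ξ ^ 2 := by
      ext ω; ring
    rw [this]
    exact (hZ2.sub (hZ.const_mul _)).add (integrable_const _)
  have hval : ∫ ω, (hcZrand φ (L / n) ω - Ξ) ^ 2 ∂P ≤ 4 * t * Ξ ^ 2 := by
    have : ∀ ω : (Fin n → X) × (Fin n × Fin n → ℝ), (hcZrand φ (L / n) ω - Ξ) ^ 2 =
        hcZrand φ (L / n) ω ^ 2 - 2 * Ξ * hcZrand φ (L / n) ω + Ξ ^ 2 := by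
      intro ω; ring
    simp_rw [this]
    have hsub : Integrable (fun ω : (Fin n → X) × (Fin n × Fin n → ℝ) =>
        hcZrand φ (L / n) ω ^ 2 - 2 * Ξ * hcZrand φ (L / n) ω) P := hZ2.sub (hZ.const_mul _)
    rw [integral_add hsub (integrable_const _),
      integral_sub hZ2 (hZ.const_mul _), integral_const_mul, hE]
    simp only [integral_const, probReal_univ, one_smul]
    have h1 : ∫ ω, hcZrand φ (L / n) ω ^ 2 ∂P ≤ (1 + 2 * t) * Ξ ^ 2 := by
      refine hE2.trans ?_
      gcongr
    have h2 := mul_le_mul_of_nonneg_left hb2 (show 0 ≤ 2 * Ξ by linarith)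
    nlinarith
  have hmk := mul_meas_ge_le_integral_of_nonneg
    (Filter.Eventually.of_forall fun ω => sq_nonneg (hcZrand φ (L / n) ω - Ξ)) hint ((ε * Ξ) ^ 2)
  have hset : {ω : (Fin n → X) × (Fin n × Fin n → ℝ) | ε * Ξ ≤ |hcZrand φ (L / n) ω - Ξ|}
      ⊆ {ω | (ε * Ξ) ^ 2 ≤ (hcZrand φ (L / n) ω - Ξ) ^ 2} := by
    intro ω hω
    simp only [Set.mem_ofPred_eq] at hω ⊢
    rw [← sq_abs (hcZrand φ (L / n) ω - Ξ)]
    gcongr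
  refine (measure_mono hset).trans ?_
  rw [← ENNReal.ofReal_toReal (measure_ne_top P {ω | (ε * Ξ) ^ 2 ≤ (hcZrand φ (L / n) ω - Ξ) ^ 2})]
  apply ENNReal.ofReal_le_ofReal
  rw [measureReal_def] at hmk
  have h5 := hmk.trans hval
  have hpos : 0 < (ε * Ξ) ^ 2 := by positivity
  refine le_of_mul_le_mul_left (h5.trans ?_) hpos
  have : 4 * t ≤ ε ^ 2 * δ := by linarith
  calc 4 * t * Ξ ^ 2 ≤ ε ^ 2 * δ * Ξ ^ 2 := by gcongr
    _ = _ := by ring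
end
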